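/- Let p be a prime, G an infinite group with G ≠ G' (G is not equal to its derived subgroup), and A a module over the group ring ℤ_pG with C_G(A) = 1, where ℤ_p is the ring of p-adic integers. If A/C_A(G) is not an Artinian ℤ_p-module and A/C_A(H) is an Artinian ℤ_p-module for every proper subgroup H of G, then G is isomorphic to a quasi-cyclic q-group C_{q^∞} for some prime q. -/

import Mathlib

/-- `C_A(H)`: the `R`-submodule of `A` consisting of the elements fixed by every
element of the subgroup `H` of `G`. -/
def moduleCentralizer (R : Type*) [Ring R] {G : Type*} [Group G] (A : Type*)
    [AddCommGroup A] [Module R A] [DistribMulAction G A] [SMulCommClass G R A]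
    (H : Subgroup G) : Submodule R A where
  carrier := {a | ∀ g ∈ H, g • a = a}
  add_mem' := fun {a b} ha hb g hg => by rw [smul_add, ha g hg, hb g hg]
  zero_mem' := fun g _ => smul_zero g
  smul_mem' := fun r a ha g hg => by rw [smul_comm, ha g hg]

/-- The quasi-cyclic (Prüfer) `q`-group `C_{q^∞}`: the `q`-primary component of `ℚ/ℤ`. -/
def PruferGroup (q : ℕ) (hq : q.Prime) :
    AddSubgroup (ℚ ⧸ AddSubgroup.zmultiples (1 : ℚ)) :=
  haveI : Fact q.Prime := ⟨hq⟩
  AddCommGroup.primaryComponent (ℚ ⧸ AddSubgroup.zmultiples (1 : ℚ)) q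

section aux1
variable {p : ℕ} [Fact p.Prime] {V : Type*} [AddCommGroup V] [Module ℤ_[p] V]

theorem aux_finite_quot (k : ℕ) : Finite (ℤ_[p] ⧸ Ideal.span {(p : ℤ_[p]) ^ k}) := by
  have : NeZero (p ^ k) := ⟨pow_ne_zero _ (Fact.out : p.Prime).ne_zero⟩
  rw [← PadicInt.ker_toZModPow]
  exact Finite.of_injective _ (RingHom.kerLift_injective (PadicInt.toZModPow (p := p) k))

theorem aux_finite_torsion [IsArtinian ℤ_[p] V] (k : ℕ) :
    Finite (Submodule.torsionBy ℤ_[p] V ((p : ℤ_[p]) ^ k)) := by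
  have := aux_finite_quot (p := p) k
  have : IsArtinian (ℤ_[p] ⧸ Ideal.span {(p : ℤ_[p]) ^ k})
      (Submodule.torsionBy ℤ_[p] V ((p : ℤ_[p]) ^ k)) := isArtinian_of_tower ℤ_[p] inferInstance
  have : Module.Finite (ℤ_[p] ⧸ Ideal.span {(p : ℤ_[p]) ^ k})
      (Submodule.torsionBy ℤ_[p] V ((p : ℤ_[p]) ^ k)) := 
      IsSemiprimaryRing.finite_of_isArtinian _ (ℤ_[p] ⧸ Ideal.span {(p : ℤ_[p]) ^ k}) _
  exact Module.finite_of_finite (ℤ_[p] ⧸ Ideal.span {(p : ℤ_[p]) ^ k})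

theorem aux_torsion [IsArtinian ℤ_[p] V] (v : V) :
    ∃ k : ℕ, (p : ℤ_[p]) ^ k • v = 0 := by
  obtain ⟨n, ⟨y, hy⟩, h⟩ := IsArtinian.exists_pow_succ_smul_dvd (p : ℤ_[p])
    (⟨v, Submodule.mem_span_singleton_self v⟩ : Submodule.span ℤ_[p] {v})
  obtain ⟨r, rfl⟩ := Submodule.mem_span_singleton.1 hy
  have h := congrArg Subtype.val h
  simp only [Submodule.coe_smul] at h
  refine ⟨n, ?_⟩
  have hu : IsUnit (1 - (p : ℤ_[p]) * r) := by
    by_contra hc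
    have h1 : (p : ℤ_[p]) ∈ nonunits ℤ_[p] := PadicInt.p_nonunit
    have h2 : (p : ℤ_[p]) * r ∈ nonunits ℤ_[p] := by
      rw [← IsLocalRing.mem_maximalIdeal] at h1 ⊢
      exact Ideal.mul_mem_right _ _ h1
    have := IsLocalRing.nonunits_add hc h2
    simp at this
  rw [← hu.smul_eq_zero, ← mul_smul, sub_mul, sub_smul, one_mul, ← h, ← mul_smul, pow_succ]
  rw [sub_eq_zero]
  congr 1
  ring
end aux1

section aux2
variable {G : Type*} [Group G] (p : ℕ) [Fact p.Prime]
    (A : Type*) [AddCommGroup A] [Module ℤ_[p] A] [DistribMulAction G A]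
    [SMulCommClass G ℤ_[p] A]

theorem aux_mem {H : Subgroup G} {a : A} :
  a ∈ moduleCentralizer ℤ_[p] A H ↔ ∀ g ∈ H, g • a = a := Iff.rfl

theorem aux_sup (H K : Subgroup G) (hH : IsArtinian ℤ_[p] (A ⧸ moduleCentralizer ℤ_[p] A H))
    (hK : IsArtinian ℤ_[p] (A ⧸ moduleCentralizer ℤ_[p] A K)) :
    IsArtinian ℤ_[p] (A ⧸ moduleCentralizer ℤ_[p] A (H ⊔ K)) := by
  let f : A →ₗ[ℤ_[p]] (A ⧸ moduleCentralizer ℤ_[p] A H) × (A ⧸ moduleCentralizer ℤ_[p] A K) :=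
    (Submodule.mkQ _).prod (Submodule.mkQ _)
  have hf : LinearMap.ker f = moduleCentralizer ℤ_[p] A (H ⊔ K) := by
    rw [LinearMap.ker_prod, Submodule.ker_mkQ, Submodule.ker_mkQ]
    ext a
    rw [Submodule.mem_inf, aux_mem, aux_mem, aux_mem]
    constructor
    · rintro ⟨h1, h2⟩
      have : H ⊔ K ≤ MulAction.stabilizer G a := sup_le h1 h2
      exact this
    · intro h
      exact ⟨fun g hg => h g (le_sup_left (a := H) hg), fun g hg => h g (le_sup_right (a := H) hg)⟩
  rw [← hf]
  exact isArtinian_of_injective (f.ker.liftQ f le_rfl) (LinearMap.ker_eq_bot.1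
    (Submodule.ker_liftQ_eq_bot _ _ _ le_rfl))

theorem aux_hollow
    (hG : ¬ IsArtinian ℤ_[p] (A ⧸ moduleCentralizer ℤ_[p] A (⊤ : Subgroup G)))
    (hH : ∀ H : Subgroup G, H ≠ ⊤ → IsArtinian ℤ_[p] (A ⧸ moduleCentralizer ℤ_[p] A H))
    (H K : Subgroup G) (h : H ⊔ K = ⊤) : H = ⊤ ∨ K = ⊤ := by
  by_contra! hc
  exact hG (h ▸ aux_sup p A H K (hH H hc.1) (hH K hc.2))
end aux2

theorem aux_noncyc {G : Type*} [Group G] [Infinite G]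
    (hol : ∀ H K : Subgroup G, H ⊔ K = ⊤ → H = ⊤ ∨ K = ⊤) (x : G) :
    Subgroup.zpowers x ≠ ⊤ := by
  intro hx
  have hx0 : ¬ IsOfFinOrder x := by
    rw [← orderOf_eq_zero_iff]
    exact Infinite.orderOf_eq_zero_of_forall_mem_zpowers fun y => hx ▸ Subgroup.mem_top y
  have h23 : Subgroup.zpowers (x ^ 2) ⊔ Subgroup.zpowers (x ^ 3) = ⊤ := by
    rw [eq_top_iff, ← hx, Subgroup.zpowers_le]
    have : x = (x ^ 2)⁻¹ * x ^ 3 := by group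
    have h2 : (x ^ 2)⁻¹ * x ^ 3 ∈ Subgroup.zpowers (x ^ 2) ⊔ Subgroup.zpowers (x ^ 3) :=
      mul_mem (inv_mem (Subgroup.mem_sup_left (Subgroup.mem_zpowers _)))
        (Subgroup.mem_sup_right (Subgroup.mem_zpowers _))
    rwa [← this] at h2
  have key : ∀ n : ℕ, 1 < n → Subgroup.zpowers (x ^ n) ≠ ⊤ := by
    intro n hn h
    have : x ∈ Subgroup.zpowers (x ^ n) := h ▸ Subgroup.mem_top x
    obtain ⟨k, hk⟩ := Subgroup.mem_zpowers_iff.1 this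
    rw [← zpow_natCast, ← zpow_mul] at hk
    have := (injective_zpow_iff_not_isOfFinOrder.2 hx0) (hk.trans (zpow_one x).symm)
    have := Int.eq_one_or_neg_one_of_mul_eq_one this
    omega
  rcases hol _ _ h23 with h | h
  · exact key 2 (by norm_num) h
  · exact key 3 (by norm_num) h

theorem aux_fi {G : Type*} [Group G] [Infinite G]
    (hol : ∀ H K : Subgroup G, H ⊔ K = ⊤ → H = ⊤ ∨ K = ⊤) (H : Subgroup G)
    (hf : H.FiniteIndex) : H = ⊤ := by
  have key : ∀ s : Finset (G ⧸ H), H ⊔ s.sup (fun c => Subgroup.zpowers c.out) = ⊤ → H = ⊤ := by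
    classical
    intro s
    induction s using Finset.induction_on with
    | empty => simp
    | insert c s hc ih =>
      intro h
      rw [Finset.sup_insert, sup_left_comm] at h
      rcases hol _ _ h with h | h
      · exact absurd h (aux_noncyc hol _)
      · exact ih h
  have : Fintype (G ⧸ H) := Fintype.ofFinite _
  apply key Finset.univ
  rw [eq_top_iff]
  intro g _
  have h1 : (QuotientGroup.mk g : G ⧸ H).out⁻¹ * g ∈ H := by
    rw [← QuotientGroup.eq]; exact Quotient.out_eq _
  rw [← mul_inv_cancel_left (QuotientGroup.mk g : G ⧸ H).out g]
  refine mul_mem (Subgroup.mem_sup_right ?_) (Subgroup.mem_sup_left h1)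
  exact (Finset.le_sup (f := fun c : G ⧸ H => Subgroup.zpowers c.out)
    (Finset.mem_univ (QuotientGroup.mk g : G ⧸ H))) (Subgroup.mem_zpowers _)

theorem aux_triv {G : Type*} [Group G] (p : ℕ) [Fact p.Prime]
    (A : Type*) [AddCommGroup A] [Module ℤ_[p] A] [DistribMulAction G A]
    [SMulCommClass G ℤ_[p] A] (fi : ∀ H : Subgroup G, H.FiniteIndex → H = ⊤)
    (N : Subgroup G) [N.Normal] (hN : IsArtinian ℤ_[p] (A ⧸ moduleCentralizer ℤ_[p] A N))
    (g : G) (a : A) : g • a - a ∈ moduleCentralizer ℤ_[p] A N := by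
  have inv : ∀ (g : G) (a : A), a ∈ moduleCentralizer ℤ_[p] A N →
      g • a ∈ moduleCentralizer ℤ_[p] A N := by
    intro g a ha n hn
    have := ha (g⁻¹ * n * g) (by simpa using Subgroup.Normal.conj_mem ‹_› n hn g⁻¹)
    calc n • g • a = g • (g⁻¹ * n * g) • a := by simp [smul_smul, mul_assoc]
      _ = _ := by rw [this]
  let S : Subgroup G :=
    { carrier := {g | g • a - a ∈ moduleCentralizer ℤ_[p] A N}
      one_mem' := by simp
      mul_mem' := by
        intro x y hx hy
        have := add_mem (inv x _ hy) hx
        simpa [smul_sub, smul_smul] using this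
      inv_mem' := by
        intro x hx
        have := neg_mem (inv x⁻¹ _ hx)
        simpa [smul_sub, smul_smul] using this }
  obtain ⟨k, hk⟩ := aux_torsion (p := p) ((moduleCentralizer ℤ_[p] A N).mkQ a)
  have := aux_finite_torsion (p := p) (V := A ⧸ moduleCentralizer ℤ_[p] A N) k
  have hk' : (p : ℤ_[p]) ^ k • a ∈ moduleCentralizer ℤ_[p] A N := by
    rw [← map_smul] at hk
    exact (Submodule.Quotient.mk_eq_zero _).1 hk
  let F : G → Submodule.torsionBy ℤ_[p] (A ⧸ moduleCentralizer ℤ_[p] A N) ((p : ℤ_[p]) ^ k) :=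
    fun g => ⟨(moduleCentralizer ℤ_[p] A N).mkQ (g • a), by
      rw [Submodule.mem_torsionBy_iff, ← map_smul, Submodule.mkQ_apply,
        Submodule.Quotient.mk_eq_zero, ← smul_comm]
      exact inv _ _ hk'⟩
  have hF : ∀ x y : G, F x = F y → x⁻¹ * y ∈ S := by
    intro x y h
    have h := congrArg Subtype.val h
    have h : x • a - y • a ∈ moduleCentralizer ℤ_[p] A N := (Submodule.Quotient.eq _).1 h
    have := neg_mem (inv x⁻¹ _ h)
    show (x⁻¹ * y) • a - a ∈ moduleCentralizer ℤ_[p] A N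
    simpa [smul_sub, smul_smul] using this
  have hS : S.FiniteIndex := by
    have : Finite (G ⧸ S) := by
      apply Finite.of_injective (fun c : G ⧸ S => F c.out)
      intro c d h
      have := hF _ _ h
      rw [← QuotientGroup.eq] at this
      simpa using this
    exact Subgroup.finiteIndex_of_finite_quotient
  have : g ∈ S := fi S hS ▸ Subgroup.mem_top g
  exact this

theorem aux_comm {G : Type*} [Group G] [Infinite G] (p : ℕ) [Fact p.Prime]
    (A : Type*) [AddCommGroup A] [Module ℤ_[p] A] [DistribMulAction G A]
    [SMulCommClass G ℤ_[p] A]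
    (hG' : commutator G ≠ ⊤)
    (hfaith : ∀ g : G, (∀ a : A, g • a = a) → g = 1)
    (hH : ∀ H : Subgroup G, H ≠ ⊤ → IsArtinian ℤ_[p] (A ⧸ moduleCentralizer ℤ_[p] A H))
    (hol : ∀ H K : Subgroup G, H ⊔ K = ⊤ → H = ⊤ ∨ K = ⊤) (g h : G) : g * h = h * g := by
  have key : ∀ (g h : G) (a : A), h • (g • a - a) = g • a - a := by
    intro g h a
    have hp : Subgroup.zpowers h ⊔ commutator G ≠ ⊤ := by
      intro hc
      rcases hol _ _ hc with h1 | h1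
      · exact aux_noncyc hol h h1
      · exact hG' h1
    have : (Subgroup.zpowers h ⊔ commutator G).Normal := 
      Subgroup.Normal.of_commutator_le _ le_sup_right
    exact aux_triv p A (aux_fi hol) _ (hH _ hp) g a h
      (Subgroup.mem_sup_left (Subgroup.mem_zpowers h))
  have : (h * g)⁻¹ * (g * h) = 1 := by
    apply hfaith
    intro a
    rw [mul_smul, inv_smul_eq_iff]
    have h1 := key g h a
    have h2 := key h g a
    rw [smul_sub, sub_eq_iff_eq_add, smul_smul] at h1 h2
    rw [h1, h2]; abel
  exact (inv_mul_eq_one.1 this).symm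

theorem aux_QZ_div (n : ℕ) (hn : n ≠ 0) (y : ℚ ⧸ AddSubgroup.zmultiples (1 : ℚ)) :
    ∃ z, n • z = y := by
  induction y using QuotientAddGroup.induction_on with
  | H t =>
    refine ⟨QuotientAddGroup.mk (t / n), ?_⟩
    rw [← QuotientAddGroup.mk_nsmul]
    congr 1
    rw [nsmul_eq_mul]
    field_simp

theorem aux_QZ_tors (n : ℕ) (hn : n ≠ 0) (y : ℚ ⧸ AddSubgroup.zmultiples (1 : ℚ))
    (hy : n • y = 0) : ∃ k : ℤ, y = k • (QuotientAddGroup.mk (1 / (n : ℚ))) := by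
  induction y using QuotientAddGroup.induction_on with
  | H t =>
    rw [← QuotientAddGroup.mk_nsmul, QuotientAddGroup.eq_zero_iff,
      AddSubgroup.mem_zmultiples_iff] at hy
    obtain ⟨k, hk⟩ := hy
    refine ⟨k, ?_⟩
    rw [← QuotientAddGroup.mk_zsmul]
    congr 1
    simp only [zsmul_eq_mul, nsmul_eq_mul, mul_one] at hk ⊢
    rw [hk]; field_simp

theorem aux_QZ_one (n : ℕ) (hn : n ≠ 0) :
    n • (QuotientAddGroup.mk (1 / (n : ℚ)) : ℚ ⧸ AddSubgroup.zmultiples (1 : ℚ)) = 0 := by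
  rw [← QuotientAddGroup.mk_nsmul, QuotientAddGroup.eq_zero_iff,
      AddSubgroup.mem_zmultiples_iff]
  refine ⟨1, ?_⟩
  simp only [one_smul, nsmul_eq_mul]
  field_simp

theorem aux_QZ_ne (n : ℕ) (hn : 1 < n) :
    (QuotientAddGroup.mk (1 / (n : ℚ)) : ℚ ⧸ AddSubgroup.zmultiples (1 : ℚ)) ≠ 0 := by
  rw [Ne, QuotientAddGroup.eq_zero_iff, AddSubgroup.mem_zmultiples_iff]
  rintro ⟨k, hk⟩
  have h0 : (n : ℚ) ≠ 0 := by positivity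
  simp only [zsmul_eq_mul, mul_one] at hk
  rw [eq_div_iff h0] at hk
  have hk : k * (n : ℤ) = 1 := by exact_mod_cast hk
  have := Int.eq_one_or_neg_one_of_mul_eq_one' hk
  omega

theorem aux_QZ_fin (n : ℕ) (hn : n ≠ 0) :
    {y : ℚ ⧸ AddSubgroup.zmultiples (1 : ℚ) | n • y = 0}.Finite := by
  have h1 : IsOfFinAddOrder (QuotientAddGroup.mk (1 / (n : ℚ)) : ℚ ⧸ AddSubgroup.zmultiples (1 : ℚ)) :=
    isOfFinAddOrder_iff_nsmul_eq_zero.2 ⟨n, Nat.pos_of_ne_zero hn, aux_QZ_one n hn⟩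
  have h2 := finite_zmultiples.2 h1
  refine h2.subset ?_
  intro y hy
  obtain ⟨k, hk⟩ := aux_QZ_tors n hn y hy
  exact ⟨k, hk.symm⟩

theorem aux_baer {G : Type*} [AddCommGroup G] (h : ∀ (n : ℕ), n ≠ 0 → ∀ y : G, ∃ z, n • z = y) :
    Module.Baer ℤ G := by
  have : ∀ (n : ℤ), n ≠ 0 → ∀ y : G, ∃ z, n • z = y := by
    intro n hn y
    rcases Int.natAbs_eq n with h1 | h1
    · obtain ⟨z, hz⟩ := h n.natAbs (by simpa using hn) y
      exact ⟨z, by rw [h1, natCast_zsmul, hz]⟩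
    · obtain ⟨z, hz⟩ := h n.natAbs (by simpa using hn) y
      exact ⟨-z, by rw [h1, neg_smul_neg, natCast_zsmul, hz]⟩
  have : DivisibleBy G ℤ := divisibleByOfSMulRightSurj G ℤ (fun {n} hn y => this n hn y)
  exact Module.Baer.of_divisible G

theorem aux_mem_pruf (q : ℕ) (hq : q.Prime) (y : ℚ ⧸ AddSubgroup.zmultiples (1 : ℚ)) :
    y ∈ PruferGroup q hq ↔ ∃ k : ℕ, q ^ k • y = 0 := Iff.rfl

theorem aux_pruf_div (q : ℕ) (hq : q.Prime) (n : ℕ) (hn : n ≠ 0) (y : PruferGroup q hq) :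
    ∃ z, n • z = y := by
  obtain ⟨y, hy⟩ := y
  obtain ⟨k, hk⟩ := hy
  obtain ⟨j, m, hm, rfl⟩ := Nat.exists_eq_pow_mul_and_not_dvd hn q hq.ne_one
  obtain ⟨w, hw⟩ := aux_QZ_div (q ^ j) (pow_ne_zero _ hq.ne_zero) y
  have hw2 : q ^ (k + j) • w = 0 := by rw [pow_add, mul_smul, hw]; exact hk
  have hc : IsCoprime (m : ℤ) ((q ^ (k + j) : ℕ) : ℤ) := by
    rw [Nat.isCoprime_iff_coprime]
    exact (((Nat.Prime.coprime_iff_not_dvd hq).2 hm).symm).pow_right _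
  obtain ⟨a, b, hab⟩ := hc
  have hw3 : m • (a • w) = w := by
    rw [← natCast_zsmul, smul_smul, mul_comm]
    have : (a * m + b * ((q ^ (k + j) : ℕ) : ℤ)) • w = w := by rw [hab, one_smul]
    rwa [add_smul, mul_smul b, natCast_zsmul w, hw2, smul_zero, add_zero] at this
  refine ⟨⟨a • w, k + j, by rw [smul_comm, hw2, smul_zero]⟩, ?_⟩
  apply Subtype.ext
  show (q ^ j * m) • (a • w) = y
  rw [mul_smul, hw3, hw]

section hollow
variable {G : Type*} [AddCommGroup G]

theorem aux_div
   (fi : ∀ H : AddSubgroup G, H.FiniteIndex → H = ⊤) (n : ℕ) (hn : n ≠ 0) (y : G) :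
   ∃ z, n • z = y := by
  by_contra hc
  let K : AddSubgroup G := (nsmulAddMonoidHom (α := G) n).range
  have hy : (QuotientAddGroup.mk y : G ⧸ K) ≠ 0 := by
    rw [Ne, QuotientAddGroup.eq_zero_iff]
    exact hc
  obtain ⟨c, hcy⟩ := CharacterModule.exists_character_apply_ne_zero_of_ne_zero hy
  let c' : (G ⧸ K) →+ (ℚ ⧸ AddSubgroup.zmultiples (1 : ℚ)) := c
  let f : G →+ (ℚ ⧸ AddSubgroup.zmultiples (1 : ℚ)) := c'.comp (QuotientAddGroup.mk' K)
  have hf : Finite f.range := by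
    apply ((aux_QZ_fin n hn).subset ?_).to_subtype
    rintro _ ⟨x, rfl⟩
    show n • f x = 0
    rw [← map_nsmul]
    show c' (QuotientAddGroup.mk (n • x)) = 0
    rw [(QuotientAddGroup.eq_zero_iff (N := K) (n • x)).2 ⟨x, rfl⟩, map_zero]
  have h1 := fi f.ker (AddSubgroup.finiteIndex_ker f)
  have h2 : y ∈ f.ker := h1 ▸ AddSubgroup.mem_top y
  exact hcy h2

theorem aux_tors (hol : ∀ H K : AddSubgroup G, H ⊔ K = ⊤ → H = ⊤ ∨ K = ⊤)
   (dv : ∀ (n : ℕ), n ≠ 0 → ∀ y : G, ∃ z, n • z = y) (x : G) :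
   IsOfFinAddOrder x := by
  by_contra hx
  have hinj : Function.Injective (zmultiplesHom G x) := by
    exact injective_zsmul_iff_not_isOfFinAddOrder.2 hx
  obtain ⟨r, hr⟩ := (aux_baer (G := ℚ) (fun n hn y => ⟨y / n, by
    rw [nsmul_eq_mul]; field_simp⟩)).extension_property_addMonoidHom (zmultiplesHom G x) hinj
      (zmultiplesHom ℚ 1)
  have hrx : r x = 1 := by simpa using DFunLike.congr_fun hr 1
  -- for a multiplicative submonoid of positive naturals
  let Sg : Submonoid ℕ → AddSubgroup G := fun M =>
    { carrier := {g | ∃ m ∈ M, ∃ k : ℤ, m * r g = k}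
      zero_mem' := ⟨1, M.one_mem, 0, by simp⟩
      add_mem' := by
        rintro a b ⟨m, hm, k, hk⟩ ⟨m', hm', k', hk'⟩
        refine ⟨m * m', M.mul_mem hm hm', m' * k + m * k', ?_⟩
        push_cast
        rw [map_add, ← hk, ← hk']; ring
      neg_mem' := by
        rintro a ⟨m, hm, k, hk⟩
        exact ⟨m, hm, -k, by simp [hk]⟩ }
  let O : Submonoid ℕ :=
    { carrier := {n | ¬ 2 ∣ n}
      one_mem' := by simp
      mul_mem' := by
        intro a b ha hb
        exact Nat.prime_two.not_dvd_mul ha hb }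
  have hsup : Sg (Submonoid.powers 2) ⊔ Sg O = ⊤ := by
    rw [eq_top_iff]
    intro g _
    obtain ⟨j, m, hm, hd⟩ := Nat.exists_eq_pow_mul_and_not_dvd (r g).den_nz 2 (by norm_num)
    have hc : IsCoprime (m : ℤ) ((2 ^ j : ℕ) : ℤ) := by
      rw [Nat.isCoprime_iff_coprime]
      exact (((Nat.Prime.coprime_iff_not_dvd Nat.prime_two).2 hm).symm).pow_right _
    obtain ⟨a, b, hab⟩ := hc
    have hg : g = (a * m) • g + (b * ((2 ^ j : ℕ) : ℤ)) • g := by rw [← add_smul, hab, one_smul]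
    have hq : ((2 ^ j * m : ℕ) : ℚ) * r g = (r g).num := by
      rw [← hd, mul_comm]; exact Rat.mul_den_eq_num _
    push_cast at hq
    rw [hg]
    refine add_mem (AddSubgroup.mem_sup_left ?_) (AddSubgroup.mem_sup_right ?_)
    · refine ⟨2 ^ j, ⟨j, rfl⟩, a * (r g).num, ?_⟩
      rw [map_zsmul, zsmul_eq_mul]
      push_cast
      rw [← hq]; ring
    · refine ⟨m, hm, b * (r g).num, ?_⟩
      rw [map_zsmul, zsmul_eq_mul]
      push_cast
      rw [← hq]; ring
  rcases hol _ _ hsup with h | h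
  · obtain ⟨z, hz⟩ := dv 3 (by norm_num) x
    have hz' : (3 : ℚ) * r z = 1 := by rw [← hrx, ← hz, map_nsmul]; simp
    have : z ∈ Sg (Submonoid.powers 2) := h ▸ AddSubgroup.mem_top z
    obtain ⟨_, ⟨j, rfl⟩, k, hk⟩ := this
    have : ((2 ^ j : ℕ) : ℚ) = ((3 * k : ℤ) : ℚ) := by
      push_cast at hk ⊢
      rw [← hk]; linear_combination -(2 : ℚ) ^ j * hz'
    have h3 : ((2 ^ j : ℕ) : ℤ) = 3 * k := by exact_mod_cast this
    have h4 : 3 ∣ 2 ^ j := by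
      have : (3 : ℤ) ∣ ((2 ^ j : ℕ) : ℤ) := ⟨k, h3⟩
      exact_mod_cast this
    have := Nat.prime_three.dvd_of_dvd_pow h4
    omega
  · obtain ⟨z, hz⟩ := dv 2 (by norm_num) x
    have hz' : (2 : ℚ) * r z = 1 := by rw [← hrx, ← hz, map_nsmul]; simp
    have : z ∈ Sg O := h ▸ AddSubgroup.mem_top z
    obtain ⟨m, hm, k, hk⟩ := this
    have : (m : ℚ) = ((2 * k : ℤ) : ℚ) := by
      push_cast at hk ⊢
      rw [← hk]; linear_combination -(m : ℚ) * hz'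
    have h3 : (m : ℤ) = 2 * k := by exact_mod_cast this
    exact hm (by omega)

theorem aux_pruf [Nontrivial G] (hol : ∀ H K : AddSubgroup G, H ⊔ K = ⊤ → H = ⊤ ∨ K = ⊤)
   (fi : ∀ H : AddSubgroup G, H.FiniteIndex → H = ⊤) :
   ∃ (q : ℕ) (hq : q.Prime), Nonempty (G ≃+ PruferGroup q hq) := by
  have dv := aux_div fi
  obtain ⟨x0, hx0⟩ := exists_ne (0 : G)
  have hx1 := aux_tors hol dv x0
  obtain ⟨q, hq, hqd⟩ := Nat.exists_prime_and_dvd (n := addOrderOf x0)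
    (by rwa [Ne, AddMonoid.addOrderOf_eq_one_iff])
  obtain ⟨x, hx⟩ : ∃ x : G, addOrderOf x = q := by
    obtain ⟨m, hm⟩ := hqd
    refine ⟨m • x0, ?_⟩
    have h0 : addOrderOf x0 ≠ 0 := hx1.addOrderOf_pos.ne'
    have hm0 : m ≠ 0 := by rintro rfl; simp [hm] at h0
    rw [addOrderOf_nsmul' _ hm0, hm, Nat.gcd_mul_left_left, Nat.mul_div_cancel _ (Nat.pos_of_ne_zero hm0)]
  refine ⟨q, hq, ?_⟩
  have : Fact q.Prime := ⟨hq⟩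
  let u : ℚ ⧸ AddSubgroup.zmultiples (1 : ℚ) := QuotientAddGroup.mk (1 / (q : ℚ))
  have hu : q • u = 0 := aux_QZ_one q hq.ne_zero
  let c : PruferGroup q hq := ⟨u, 1, by rw [pow_one]; exact hu⟩
  have hc : addOrderOf c = q := by
    apply addOrderOf_eq_prime
    · exact Subtype.ext hu
    · intro h
      exact aux_QZ_ne q hq.one_lt (congrArg Subtype.val h)
  have hc0 : c ≠ 0 := by
    intro h
    exact aux_QZ_ne q hq.one_lt (congrArg Subtype.val h)
  -- the subgroup generated by c
  let S := AddSubgroup.zmultiples c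
  let i : ZMod q →+ PruferGroup q hq := ZMod.lift q ⟨zmultiplesHom _ c, by
    simp; exact Subtype.ext hu⟩
  let f : ZMod q →+ G := ZMod.lift q ⟨zmultiplesHom _ x, by
    simp; rw [← hx]; exact addOrderOf_nsmul_eq_zero x⟩
  have hi : Function.Injective i := by
    apply (ZMod.lift_injective _).2
    intro m hm
    rw [ZMod.intCast_zmod_eq_zero_iff_dvd, ← hc]
    exact addOrderOf_dvd_iff_zsmul_eq_zero.2 hm
  have hfi : Function.Injective f := by
    apply (ZMod.lift_injective _).2
    intro m hm
    rw [ZMod.intCast_zmod_eq_zero_iff_dvd, ← hx]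
    exact addOrderOf_dvd_iff_zsmul_eq_zero.2 hm
  obtain ⟨φ, hφ⟩ := (aux_baer dv).extension_property_addMonoidHom i hi f
  have hsoc : ∀ y : PruferGroup q hq, q • y = 0 → φ y = 0 → y = 0 := by
    intro y hy h0
    obtain ⟨k, hk⟩ := aux_QZ_tors q hq.ne_zero y.1 (congrArg Subtype.val hy)
    have hk : y = i (k : ZMod q) := by
      rw [ZMod.lift_coe]
      exact Subtype.ext hk
    rw [hk] at h0
    have h2 : f (k : ZMod q) = 0 := by rw [← hφ]; exact h0
    rw [hk, hfi (h2.trans (map_zero f).symm), map_zero]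
  have hφi : Function.Injective φ := by
    rw [injective_iff_map_eq_zero]
    have : ∀ (k : ℕ) (y : PruferGroup q hq), q ^ k • y = 0 → φ y = 0 → y = 0 := by
      intro k
      induction k with
      | zero => intro y hy _; simpa using hy
      | succ k ih =>
        intro y hy h0
        apply hsoc y _ h0
        apply ih
        · rw [← mul_smul, ← pow_succ, hy]
        · rw [map_nsmul, h0, smul_zero]
    intro y h0
    obtain ⟨k, hk⟩ := y.2
    exact this k y (Subtype.ext hk) h0
  obtain ⟨r, hr⟩ := (aux_baer (aux_pruf_div q hq)).extension_property_addMonoidHom φ hφi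
    (AddMonoidHom.id _)
  have hr : ∀ y, r (φ y) = y := fun y => DFunLike.congr_fun hr y
  have hsup : φ.range ⊔ r.ker = ⊤ := by
    rw [eq_top_iff]
    intro g _
    rw [← add_sub_cancel (φ (r g)) g]
    refine add_mem (AddSubgroup.mem_sup_left ⟨_, rfl⟩) (AddSubgroup.mem_sup_right ?_)
    rw [AddMonoidHom.mem_ker, map_sub, hr, sub_self]
  rcases hol _ _ hsup with h | h
  · exact ⟨(AddEquiv.ofBijective φ ⟨hφi, AddMonoidHom.range_eq_top.1 h⟩).symm⟩
  · exfalso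
    have : φ c ∈ r.ker := h ▸ AddSubgroup.mem_top _
    rw [AddMonoidHom.mem_ker, hr] at this
    exact hc0 this
end hollow

/-- Theorem 2.1 (case `R = ℤ_p`): let `A` be a `ℤ_pG`-module where `p` is a prime and `G`
is an infinite group with `G ≠ G'` acting faithfully (`C_G(A) = 1`). If `A/C_A(G)` is not
an Artinian `ℤ_p`-module and `A/C_A(H)` is an Artinian `ℤ_p`-module for every proper
subgroup `H` of `G`, then `G` is isomorphic to a quasi-cyclic `q`-group for some prime `q`. -/
theorem artinian_padicInt_proper_subgroups_prufer (p : ℕ) [Fact p.Prime]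
    (G : Type*) [Group G] [Infinite G]
    (A : Type*) [AddCommGroup A] [Module ℤ_[p] A] [DistribMulAction G A]
    [SMulCommClass G ℤ_[p] A]
    (hG' : commutator G ≠ ⊤)
    (hfaith : ∀ g : G, (∀ a : A, g • a = a) → g = 1)
    (hG : ¬ IsArtinian ℤ_[p] (A ⧸ moduleCentralizer ℤ_[p] A (⊤ : Subgroup G)))
    (hH : ∀ H : Subgroup G, H ≠ ⊤ → IsArtinian ℤ_[p] (A ⧸ moduleCentralizer ℤ_[p] A H)) :
    ∃ (q : ℕ) (hq : q.Prime), Nonempty (G ≃* Multiplicative (PruferGroup q hq)) := by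

  have hol := aux_hollow p A hG hH
  have fi := aux_fi hol
  have hcomm := aux_comm p A hG' hfaith hH hol
  let _ : CommGroup G := { ‹Group G› with mul_comm := hcomm }
  obtain ⟨q, hq, ⟨e⟩⟩ := aux_pruf (G := Additive G)
    (by
      intro H K h
      have h' := hol (AddSubgroup.toSubgroup' H) (AddSubgroup.toSubgroup' K) (by
        rw [← map_sup, h]; rfl)
      rcases h' with h' | h'
      · left; exact AddSubgroup.toSubgroup'.injective h'
      · right; exact AddSubgroup.toSubgroup'.injective h')
    (by
      intro H h
      have h' := fi (AddSubgroup.toSubgroup' H) ⟨h.index_ne_zero⟩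
      exact AddSubgroup.toSubgroup'.injective h')
  exact ⟨q, hq, ⟨AddEquiv.toMultiplicativeRight e⟩⟩
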